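/- arXiv:1911.13059 — 3 statements merged into one kernel-verified Lean document; each statement's English description precedes it below -/
import Mathlib

section
/- Let q be a prime power, m a positive integer, θ a generator of Gal(F_{q^m}/F_q), g ∈ F_{q^m}^n, and k a positive integer. Then the F_{q^m}-dimension of the span of g, θ(g), ..., θ^{k-1}(g) (where θ is applied entrywise) equals min{k, rk_q(g)}, where rk_q(g) is the dimension over F_q of the F_q-span of the entries of g. -/
open Submodule

noncomputable section

variable {E : Type} [Field E]

instance (σ : E ≃+* E) : RingHomSurjective (σ : E →+* E) := ⟨σ.surjective⟩

/-- Entrywise application of a field automorphism to vectors, as a semilinear map. -/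
def entrywiseR {n : ℕ} (σ : E ≃+* E) :
    (Fin n → E) →ₛₗ[(σ : E →+* E)] (Fin n → E) where
  toFun v := fun i => σ (v i)
  map_add' x y := by funext i; simp
  map_smul' r x := by funext i; simp [smul_eq_mul, map_mul]

/-- Image of a code under entrywise application of a ring automorphism. -/
def mapCodeR {n : ℕ} (σ : E ≃+* E) (C : Submodule E (Fin n → E)) :
    Submodule E (Fin n → E) :=
  C.map (entrywiseR σ)

/-- Image of a code under entrywise application of an F-algebra automorphism. -/
def mapCode {F : Type} [Field F] [Algebra F E] {n : ℕ} (σ : E ≃ₐ[F] E)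
    (C : Submodule E (Fin n → E)) : Submodule E (Fin n → E) :=
  mapCodeR σ.toRingEquiv C

/-- Right action of a matrix over the base field on a code. -/
def matAct (F : Type) [Field F] [Algebra F E] {n : ℕ} (A : Matrix (Fin n) (Fin n) F)
    (C : Submodule E (Fin n → E)) : Submodule E (Fin n → E) :=
  C.map ((A.map (algebraMap F E)).vecMulLinear)

/-- Semilinear equivalence of rank-metric codes: C₁ = τ(C₂)·A. -/
def CodeEquiv (F : Type) [Field F] [Algebra F E] {n : ℕ}
    (C₁ C₂ : Submodule E (Fin n → E)) : Prop :=
  ∃ (τ : E ≃+* E) (A : Matrix (Fin n) (Fin n) F), IsUnit A ∧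
    C₁ = matAct F A (mapCodeR τ C₂)

/-- Gabidulin code. -/
def Gab {F : Type} [Field F] [Algebra F E] {n : ℕ} (θ : E ≃ₐ[F] E) (k : ℕ)
    (g : Fin n → E) : Submodule E (Fin n → E) :=
  Submodule.span E (Set.range fun j : Fin k => fun i => (θ ^ (j : ℕ)) (g i))

/-- Sum of the images of C under the first i+1 powers of σ. -/
def sumCode {F : Type} [Field F] [Algebra F E] {n : ℕ} (σ : E ≃ₐ[F] E) (i : ℕ)
    (C : Submodule E (Fin n → E)) : Submodule E (Fin n → E) :=
  ⨆ j : Fin (i + 1), mapCode (σ ^ (j : ℕ)) C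

/-- Intersection of the images of C under the first i+1 powers of σ. -/
def interCode {F : Type} [Field F] [Algebra F E] {n : ℕ} (σ : E ≃ₐ[F] E) (i : ℕ)
    (C : Submodule E (Fin n → E)) : Submodule E (Fin n → E) :=
  ⨅ j : Fin (i + 1), mapCode (σ ^ (j : ℕ)) C

/-- Dual code with respect to the standard inner product. -/
def dualCode {n : ℕ} (C : Submodule E (Fin n → E)) : Submodule E (Fin n → E) where
  carrier := {u | ∀ v ∈ C, ∑ i, u i * v i = 0}
  add_mem' := by
    intro a b ha hb v hv
    simp only [Set.mem_setOf_eq] at *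
    simp only [Pi.add_apply, add_mul, Finset.sum_add_distrib, ha v hv, hb v hv, add_zero]
  zero_mem' := by intro v hv; simp
  smul_mem' := by
    intro c a ha v hv
    simp only [Set.mem_setOf_eq] at *
    simp only [Pi.smul_apply, smul_eq_mul, mul_assoc, ← Finset.mul_sum, ha v hv, mul_zero]

/-- Twisted Gabidulin code. -/
def TGab {F : Type} [Field F] [Algebra F E] {n : ℕ} (θ : E ≃ₐ[F] E) (k : ℕ) (η : E)
    (g : Fin n → E) : Submodule E (Fin n → E) :=
  Submodule.span E
    (insert (fun i => g i + η * (θ ^ k) (g i))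
      (Set.range fun j : Fin (k - 1) => fun i => (θ ^ ((j : ℕ) + 1)) (g i)))

/-!
Stack `g, θ(g), …, θ^{k-1}(g)` as the rows of a matrix. Writing the entries of `g` in terms of a
basis of their span factors this matrix through the one of the basis, so the rank depends only on
the span and `g` may be assumed linearly independent, of some length `r`. It then suffices to see
that the `r` columns are independent when `r ≤ k`: for `k < r`, the first `k` columns already give
rank `k`. By induction on `r`, suppose the first column is a combination of the others, with
coefficients `z`. Applying `θ` and subtracting the same relation one row further down gives a
relation with coefficients `θ(z) - z` between `r - 1` columns of the matrix of `θ(g)`, so these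
vanish by induction. Hence the `z` lie in the fixed field of `θ`, and the top row makes `g`
linearly dependent, a contradiction.
-/

section MooreMatrix

variable {R A ι κ : Type*} [CommRing R] [CommRing A] [Algebra R A]

/-- The `k`-row Moore matrix of a family `g` with respect to an endomorphism `θ`: its rows are
`g, θ(g), …, θ^{k-1}(g)`, so that its row space is the span whose dimension is sought. The rows are
indexed by `Fin k`, starting from `θ ^ 0`. -/
def mooreMatrix (θ : A →ₐ[R] A) (k : ℕ) (g : ι → A) : Matrix (Fin k) ι A :=
  Matrix.of fun j i => (θ ^ (j : ℕ)) (g i)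

@[simp]
theorem mooreMatrix_apply (θ : A →ₐ[R] A) (k : ℕ) (g : ι → A) (j : Fin k) (i : ι) :
    mooreMatrix θ k g j i = (θ ^ (j : ℕ)) (g i) :=
  rfl

theorem mooreMatrix_sum_smul [Fintype κ] (θ : A →ₐ[R] A) (k : ℕ) (h : κ → A)
    (C : Matrix ι κ R) :
    mooreMatrix θ k (fun i => ∑ l, C i l • h l) =
      mooreMatrix θ k h * C.transpose.map (algebraMap R A) := by
  ext j i
  simp only [mooreMatrix_apply, Matrix.mul_apply, Matrix.map_apply, Matrix.transpose_apply,
    map_sum, map_smul]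
  exact Finset.sum_congr rfl fun l _ => by rw [Algebra.smul_def, mul_comm]

theorem rank_mooreMatrix_mono [StrongRankCondition A] [Fintype ι] [Fintype κ] (θ : A →ₐ[R] A)
    (k : ℕ) {g : ι → A} {h : κ → A} (hgh : span R (Set.range g) ≤ span R (Set.range h)) :
    (mooreMatrix θ k g).rank ≤ (mooreMatrix θ k h).rank := by
  have hg (i : ι) : ∃ c : κ → R, ∑ l, c l • h l = g i :=
    (mem_span_range_iff_exists_fun R).1 (hgh (subset_span ⟨i, rfl⟩))
  choose C hC using hg
  obtain rfl : (fun i => ∑ l, C i l • h l) = g := funext hC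
  rw [mooreMatrix_sum_smul θ k h C]
  exact Matrix.rank_mul_le_left _ _

theorem sum_sub_mul_pow_apply_eq_zero [Fintype ι] (θ : A →ₐ[R] A) {k : ℕ} {b z : ι → A} {c : A}
    (hz : ∀ j < k + 1, ∑ i, z i * (θ ^ j) (b i) = (θ ^ j) c) {j : ℕ} (hj : j < k) :
    ∑ i, (θ (z i) - z i) * (θ ^ j) (θ (b i)) = 0 := by
  have hθ : ∑ i, θ (z i) * (θ ^ (j + 1)) (b i) = (θ ^ (j + 1)) c := by
    simpa [pow_succ'] using congrArg θ (hz j (by lia))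
  have hsub := sub_eq_zero.2 (hθ.trans (hz (j + 1) (by lia)).symm)
  simpa [pow_succ, sub_mul] using hsub

end MooreMatrix

section FixedField

variable {K L ι : Type*} [Field K] [Field L] [Algebra K L]

theorem linearIndependent_col_mooreMatrix {θ : L →ₐ[K] L}
    (hθ : ∀ x, θ x = x → x ∈ Set.range (algebraMap K L)) {k r : ℕ} (hrk : r ≤ k)
    {b : Fin r → L} (hb : LinearIndependent K b) :
    LinearIndependent L (mooreMatrix θ k b).col := by
  induction r generalizing k with
  | zero => exact linearIndependent_empty_type
  | succ r ih =>
    obtain ⟨htail, hb₀⟩ := linearIndependent_finSucc.1 hb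
    refine linearIndependent_finSucc.2 ⟨ih (by lia) htail, fun hmem => hb₀ ?_⟩
    obtain ⟨k, rfl⟩ : ∃ l, k = l + 1 := ⟨k - 1, by lia⟩
    obtain ⟨z, hz⟩ := (mem_span_range_iff_exists_fun L).1 hmem
    have hrel (j : ℕ) (hj : j < k + 1) :
        ∑ i, z i * (θ ^ j) (Fin.tail b i) = (θ ^ j) (b 0) := by
      simpa [Fin.tail] using congrFun hz ⟨j, hj⟩
    have hθtail : LinearIndependent K (θ ∘ Fin.tail b) :=
      htail.map' θ.toLinearMap (LinearMap.ker_eq_bot.2 θ.injective)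
    have hfixed (i : Fin r) : θ (z i) = z i := by
      refine sub_eq_zero.1 (Fintype.linearIndependent_iff.1 (ih (k := k) (by lia) hθtail)
        (fun i => θ (z i) - z i) ?_ i)
      ext j
      simpa using sum_sub_mul_pow_apply_eq_zero θ hrel j.isLt
    choose a ha using fun i => hθ (z i) (hfixed i)
    refine (mem_span_range_iff_exists_fun K).2 ⟨a, ?_⟩
    simpa [Algebra.smul_def, ha] using hrel 0 (by lia)

theorem rank_mooreMatrix_of_linearIndependent {θ : L →ₐ[K] L}
    (hθ : ∀ x, θ x = x → x ∈ Set.range (algebraMap K L)) (k : ℕ) {r : ℕ}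
    {b : Fin r → L} (hb : LinearIndependent K b) :
    (mooreMatrix θ k b).rank = min k r := by
  have rank_eq_of_le {s : ℕ} (hsk : s ≤ k) {c : Fin s → L} (hc : LinearIndependent K c) :
      (mooreMatrix θ k c).rank = s := by
    rw [Matrix.rank_eq_finrank_span_cols,
      finrank_span_eq_card (linearIndependent_col_mooreMatrix hθ hsk hc), Fintype.card_fin]
  rcases le_total r k with hrk | hkr
  · rw [min_eq_right hrk, rank_eq_of_le hrk hb]
  · rw [min_eq_left hkr]
    refine le_antisymm (Matrix.rank_le_height _) ?_
    calc
      k = (mooreMatrix θ k (b ∘ Fin.castLE hkr)).rank :=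
        (rank_eq_of_le le_rfl (hb.comp _ (Fin.castLE_injective hkr))).symm
      _ ≤ (mooreMatrix θ k b).rank :=
        rank_mooreMatrix_mono θ k (span_mono (Set.range_comp_subset_range _ _))

theorem rank_mooreMatrix [Fintype ι] {θ : L →ₐ[K] L}
    (hθ : ∀ x, θ x = x → x ∈ Set.range (algebraMap K L)) (k : ℕ) (g : ι → L) :
    (mooreMatrix θ k g).rank = min k (Module.finrank K (span K (Set.range g))) := by
  have : FiniteDimensional K (span K (Set.range g)) := .span_of_finite K (Set.finite_range g)
  obtain ⟨b, -, hspan, hb⟩ := exists_fun_fin_finrank_span_eq K (Set.range g)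
  rw [← rank_mooreMatrix_of_linearIndependent hθ k hb]
  exact (rank_mooreMatrix_mono θ k hspan.ge).antisymm (rank_mooreMatrix_mono θ k hspan.le)

theorem mem_range_algebraMap_of_forall_mem_zpowers [IsGalois K L] {θ : L ≃ₐ[K] L}
    (hθ : ∀ τ : L ≃ₐ[K] L, τ ∈ Subgroup.zpowers θ) {x : L} (hx : θ x = x) :
    x ∈ Set.range (algebraMap K L) := by
  refine (InfiniteGalois.mem_range_algebraMap_iff_fixed x).2 fun τ => ?_
  have hstab : θ ∈ MulAction.stabilizer (L ≃ₐ[K] L) x := hx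
  exact Subgroup.zpowers_le.2 hstab (hθ τ)

end FixedField

theorem stmt0_general {K L ι : Type*} [Field K] [Field L] [Algebra K L] [Finite ι]
    (θ : L →ₐ[K] L) (hθ : ∀ x, θ x = x → x ∈ Set.range (algebraMap K L)) (k : ℕ) (g : ι → L) :
    Module.finrank L (span L (Set.range fun j : Fin k => fun i => (θ ^ (j : ℕ)) (g i))) =
      min k (Module.finrank K (span K (Set.range g))) := by
  have := Fintype.ofFinite ι
  rw [← rank_mooreMatrix hθ k g, Matrix.rank_eq_finrank_span_row]
  rfl

/-- the dimension of the span of `g, θ(g), ..., θ^{k-1}(g)` equals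
`min k (rk_q g)`. -/
theorem stmt0 {F : Type} [Field F] [Algebra F E] [Fintype F] [Fintype E]
    (q m n k : ℕ) (hq : IsPrimePow q) (hm : 0 < m) (hk : 0 < k)
    (hF : Fintype.card F = q) (hE : Fintype.card E = q ^ m)
    (θ : E ≃ₐ[F] E) (hθ : ∀ τ : E ≃ₐ[F] E, τ ∈ Subgroup.zpowers θ)
    (g : Fin n → E) :
    Module.finrank E
        (Submodule.span E (Set.range fun j : Fin k => fun i => (θ ^ (j : ℕ)) (g i)))
      = min k (Module.finrank F (Submodule.span F (Set.range g))) := by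
  convert stmt0_general θ.toAlgHom (fun _ => mem_range_algebraMap_of_forall_mem_zpowers hθ) k g <;>
    rw [AlgEquiv.coe_pow, AlgHom.coe_pow, AlgEquiv.coe_toAlgHom]
end
end

section
/- Let C be an [n,k]_{q^m} code, σ ∈ Gal(F_{q^m}/F_q), and Δ_i^σ(C) := s_{i+1}^σ(C) − s_i^σ(C) where s_i^σ(C) = dim Σ_{j=0}^i σ^j(C). Then the sequence of increments is non-increasing: k ≥ Δ_0^σ(C) ≥ Δ_1^σ(C) ≥ ... ≥ Δ_{n-k}^σ(C) = 0. -/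
/-!
Write `S i = C + σ C + ⋯ + σ ^ i C`, so that `S (i + 1) = S i + σ (S i)`. Choose a complement `U` of
`S i` in `S (i + 1)`. As `σ (S i) ≤ S (i + 1)`, only the image of `U` can contribute anything new to
`S (i + 2) = S (i + 1) + σ (S i) + σ U`, and `dim σ U ≤ dim U`: the increments do not increase.
Hence the first `n - k + 1` of them are all at least `Δ_{n-k}`, while their sum is at most the
codimension `n - k` of `C`; this forces `Δ_{n-k} = 0`. The argument applies to any semilinear
endomorphism in place of the entrywise action of `σ`.
-/

open Submodule

noncomputable section

variable {E : Type} [Field E]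

lemma add_mul_increment_le_of_antitone {s : ℕ → ℕ} (hs : Monotone s)
    (hinc : Antitone fun i => s (i + 1) - s i) (i : ℕ) :
    s 0 + (i + 1) * (s (i + 1) - s i) ≤ s (i + 1) := by
  have hsum : (i + 1) * (s (i + 1) - s i) ≤ ∑ j ∈ Finset.range (i + 1), (s (j + 1) - s j) := by
    simpa only [Finset.card_range, smul_eq_mul] using
      Finset.card_nsmul_le_sum (Finset.range (i + 1)) (fun j => s (j + 1) - s j) _
        fun j hj => hinc (Finset.mem_range_succ_iff.mp hj)
  rw [Finset.sum_range_tsub hs] at hsum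
  have h0 : s 0 ≤ s (i + 1) := hs (Nat.zero_le _)
  omega

section SemilinearOrbit

variable {K V : Type*} [DivisionRing K] [AddCommGroup V] [Module K V]
  {σ : K →+* K} [RingHomSurjective σ]

lemma finrank_map_le_of_semilinear {L W : Type*} [DivisionRing L] [AddCommGroup W] [Module L W]
    {τ : K →+* L} [RingHomSurjective τ] (f : V →ₛₗ[τ] W)
    (U : Submodule K V) [FiniteDimensional K U] :
    Module.finrank L (U.map f) ≤ Module.finrank K U := by
  simpa only [Module.finrank_eq_spanFinrank_of_free, spanFinrank_top] using
    spanFinrank_map_le_of_fg f (Module.Finite.iff_fg.mp ‹FiniteDimensional K U›)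

lemma finrank_sup_map_add_finrank_le (f : V →ₛₗ[σ] V) {S T : Submodule K V}
    [FiniteDimensional K T] (hST : S ≤ T) (hfS : S.map f ≤ T) :
    Module.finrank K ↥(T ⊔ T.map f) + Module.finrank K S ≤
      Module.finrank K T + Module.finrank K T := by
  obtain ⟨U, hdisj, hsup⟩ := IsModularLattice.exists_disjoint_and_sup_eq hST
  have : FiniteDimensional K S := finiteDimensional_of_le hST
  have : FiniteDimensional K U := finiteDimensional_of_le (hsup ▸ le_sup_right)
  have hdim : Module.finrank K T = Module.finrank K S + Module.finrank K U := by
    rw [← finrank_sup_add_finrank_inf_eq, hdisj.eq_bot, finrank_bot, add_zero, hsup]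
  have hnew : T ⊔ T.map f = T ⊔ U.map f := by
    conv_lhs => rw [← hsup, Submodule.map_sup, hsup, ← sup_assoc, sup_eq_left.mpr hfS]
  have hle : Module.finrank K ↥(T ⊔ T.map f) ≤ Module.finrank K T + Module.finrank K U := by
    rw [hnew]
    exact (finrank_add_le_finrank_add_finrank T (U.map f)).trans
      (Nat.add_le_add_left (finrank_map_le_of_semilinear f U) _)
  omega

/-- The sum `C + f C + ⋯ + f ^ i C` of iterated images of `C` under a semilinear endomorphism `f`,
as a monotone function of `i`; for the entrywise action of `σ` it is the paper's `S_i^σ(C)`. It is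
the operation `Submodule.map f` that is iterated, since the powers of `f` are semilinear over
varying ring homomorphisms. -/
def orbitSum (f : V →ₛₗ[σ] V) (C : Submodule K V) : ℕ →o Submodule K V :=
  partialSups fun j => (Submodule.map f)^[j] C

/-- The dimension gained from the `i`-th to the `(i + 1)`-st orbit sum, the paper's `Δ_i`. The
subtraction does not truncate when `C` is finite-dimensional. -/
def orbitIncrement (f : V →ₛₗ[σ] V) (C : Submodule K V) (i : ℕ) : ℕ :=
  Module.finrank K (orbitSum f C (i + 1)) - Module.finrank K (orbitSum f C i)

variable (f : V →ₛₗ[σ] V) (C : Submodule K V)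

lemma orbitSum_zero : orbitSum f C 0 = C :=
  partialSups_zero _

lemma map_orbitSum_le (i : ℕ) : (orbitSum f C i).map f ≤ orbitSum f C (i + 1) := by
  rw [Submodule.map_le_iff_le_comap]
  refine partialSups_le _ _ _ fun j hj => Submodule.map_le_iff_le_comap.mp ?_
  rw [← Function.iterate_succ_apply' (Submodule.map f)]
  exact le_partialSups_of_le (fun j => (Submodule.map f)^[j] C) (Nat.succ_le_succ hj)

lemma orbitSum_add_one (i : ℕ) :
    orbitSum f C (i + 1) = orbitSum f C i ⊔ (orbitSum f C i).map f := by
  refine le_antisymm ?_ (sup_le ((orbitSum f C).monotone i.le_succ) (map_orbitSum_le f C i))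
  have hlast : (Submodule.map f)^[i + 1] C ≤ (orbitSum f C i).map f := by
    rw [Function.iterate_succ_apply']
    exact Submodule.map_mono (le_partialSups (fun j => (Submodule.map f)^[j] C) i)
  exact (partialSups_add_one _ i).trans_le (sup_le_sup_left hlast _)

instance finiteDimensional_orbitSum [FiniteDimensional K C] (i : ℕ) :
    FiniteDimensional K (orbitSum f C i) := by
  induction i with
  | zero => rwa [orbitSum_zero]
  | succ i ih =>
    rw [orbitSum_add_one]
    infer_instance

lemma orbitIncrement_zero_le [FiniteDimensional K C] :
    orbitIncrement f C 0 ≤ Module.finrank K C := by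
  have hsup := finrank_add_le_finrank_add_finrank C (C.map f)
  have hmap := finrank_map_le_of_semilinear f C
  rw [orbitIncrement, orbitSum_add_one, orbitSum_zero]
  omega

lemma monotone_finrank_orbitSum [FiniteDimensional K C] :
    Monotone fun i => Module.finrank K (orbitSum f C i) :=
  fun _ _ hij => Submodule.finrank_mono ((orbitSum f C).monotone hij)

lemma antitone_orbitIncrement [FiniteDimensional K C] : Antitone (orbitIncrement f C) := by
  refine antitone_nat_of_succ_le fun i => ?_
  have hstep := finrank_sup_map_add_finrank_le f ((orbitSum f C).monotone i.le_succ)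
    (map_orbitSum_le f C i)
  rw [Nat.succ_eq_add_one, ← orbitSum_add_one] at hstep
  unfold orbitIncrement
  omega

lemma orbitIncrement_finrank_sub_finrank_eq_zero [FiniteDimensional K V] :
    orbitIncrement f C (Module.finrank K V - Module.finrank K C) = 0 := by
  set d := Module.finrank K V - Module.finrank K C
  have hgrowth : Module.finrank K C + (d + 1) * orbitIncrement f C d ≤ Module.finrank K V := by
    have h := add_mul_increment_le_of_antitone (monotone_finrank_orbitSum f C)
      (antitone_orbitIncrement f C) d
    rw [orbitSum_zero] at h
    exact h.trans (Submodule.finrank_le _)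
  have hlt : (d + 1) * orbitIncrement f C d < (d + 1) * 1 := by omega
  exact Nat.lt_one_iff.mp (Nat.lt_of_mul_lt_mul_left hlt)

theorem stmt8_general [FiniteDimensional K V] :
    orbitIncrement f C 0 ≤ Module.finrank K C ∧ Antitone (orbitIncrement f C) ∧
      orbitIncrement f C (Module.finrank K V - Module.finrank K C) = 0 :=
  ⟨orbitIncrement_zero_le f C, antitone_orbitIncrement f C,
    orbitIncrement_finrank_sub_finrank_eq_zero f C⟩

end SemilinearOrbit

section Code

variable {F : Type} [Field F] [Algebra F E] {n : ℕ}

lemma mapCode_mul (σ τ : E ≃ₐ[F] E) (C : Submodule E (Fin n → E)) :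
    mapCode (σ * τ) C = mapCode σ (mapCode τ C) := by
  ext x
  simp only [mapCode, mapCodeR, mem_map, exists_exists_and_eq_and]
  rfl

variable (σ : E ≃ₐ[F] E) (C : Submodule E (Fin n → E))

lemma mapCode_pow (j : ℕ) :
    mapCode (σ ^ j) C = (Submodule.map (entrywiseR σ.toRingEquiv))^[j] C := by
  induction j with
  | zero => exact Submodule.map_id C
  | succ j ih =>
    rw [Function.iterate_succ_apply', ← ih, pow_succ', mapCode_mul]
    rfl

lemma sumCode_eq_orbitSum (i : ℕ) :
    sumCode σ i C = orbitSum (entrywiseR σ.toRingEquiv) C i := by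
  simp only [sumCode, orbitSum, mapCode_pow, partialSups_eq_biSup, ← Nat.lt_succ_iff]
  rw [← Fin.equivSubtype.symm.iSup_comp, iSup_subtype]
  rfl

lemma finrank_sumCode_sub (i : ℕ) :
    Module.finrank E (sumCode σ (i + 1) C) - Module.finrank E (sumCode σ i C) =
      orbitIncrement (entrywiseR σ.toRingEquiv) C i := by
  rw [sumCode_eq_orbitSum, sumCode_eq_orbitSum, orbitIncrement]

end Code

/-- the sum-increment sequence is non-increasing:
`k ≥ Δ_0 ≥ Δ_1 ≥ ... ≥ Δ_{n-k} = 0`. -/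
theorem stmt8 {F : Type} [Field F] [Algebra F E] [Fintype F] [Fintype E]
    (q m n k : ℕ) (hq : IsPrimePow q)
    (hF : Fintype.card F = q) (hE : Fintype.card E = q ^ m)
    (hkn : k ≤ n)
    (σ : E ≃ₐ[F] E) (C : Submodule E (Fin n → E)) (hC : Module.finrank E C = k) :
    (Module.finrank E (sumCode σ 1 C) - Module.finrank E (sumCode σ 0 C) ≤ k) ∧
      (∀ i : ℕ,
        Module.finrank E (sumCode σ (i + 2) C) - Module.finrank E (sumCode σ (i + 1) C) ≤
          Module.finrank E (sumCode σ (i + 1) C) - Module.finrank E (sumCode σ i C)) ∧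
      Module.finrank E (sumCode σ (n - k + 1) C) -
          Module.finrank E (sumCode σ (n - k) C) = 0 := by
  obtain ⟨hzero, hanti, hlast⟩ := stmt8_general (entrywiseR σ.toRingEquiv) C
  rw [Module.finrank_fin_fun, hC] at hlast
  simp only [finrank_sumCode_sub]
  exact ⟨hzero.trans_eq hC, fun i => hanti i.le_succ, hlast⟩
end
end

section
/- Let 0 < k < n ≤ m, θ a generator of Gal(F_{q^m}/F_q), and C an [n,k]_{q^m} code with dim(C + θ(C)) = k+1. Then C = C_1 ⊕ G_{t,θ}(g) for some 0 ≤ t ≤ k and g ∈ F_{q^m}^n with rk_q(g) > t, where C_1 is an (k−t)-dimensional subcode admitting a basis of vectors of q-rank 1. -/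
open Submodule

noncomputable section

variable {E : Type} [Field E]

/-!
Put `T = θ` entrywise. The hypothesis makes `D = C ∩ T⁻¹C` a hyperplane of `C`. If `D` is not
`T`-stable, then `C = D + T D`; so `D` satisfies the same hypothesis, and a decomposition
`D = C₁ + G_{t,θ}(g)` with `C₁` stable yields `C = C₁ + G_{t+1,θ}(g)`. If `D` is stable, then
`C = D + ⟨g⟩` for any `g ∈ C \ D`. In a stable code every nonzero word of minimal support is
proportional to a word over the fixed field `F` of `θ`, and such words span the code. Finally, the
conjugates of `g` lie in an `E`-space spanned by `rk g` words over `F`; if `rk g ≤ t`, then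
`G_{t,θ}(g)`, being of dimension `t`, is all of that space, hence stable, and so is `C`,
contradicting `dim (C + T C) > dim C`.
-/

section Semilinear

variable {K : Type*} [DivisionRing K] {σ : K →+* K}

lemma finrank_map_of_injective [RingHomSurjective σ] {V W : Type*} [AddCommGroup V] [Module K V]
    [AddCommGroup W] [Module K W] {f : V →ₛₗ[σ] W} (hf : Function.Injective f) (U : Submodule K V) :
    Module.finrank K (U.map f) = Module.finrank K U := by
  let e : U ≃+ U.map f := AddEquiv.ofBijective (f.submoduleMap U)
    ⟨LinearMap.submoduleMap_injective hf U, LinearMap.submoduleMap_surjective f U⟩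
  have hrank := lift_rank_eq_of_equiv_equiv σ e ⟨σ.injective, RingHomSurjective.is_surjective⟩
    (map_smulₛₗ (f.submoduleMap U))
  simpa only [Module.finrank, Cardinal.toNat_lift] using (congrArg Cardinal.toNat hrank).symm

variable {V : Type*} [AddCommGroup V] [Module K V]

lemma eq_of_lt_of_le_of_finrank_le_succ {D W U : Submodule K V} [FiniteDimensional K U]
    (hDW : D < W) (hWU : W ≤ U) (h : Module.finrank K U ≤ Module.finrank K D + 1) : W = U := by
  have : FiniteDimensional K W := finiteDimensional_of_le hWU
  exact eq_of_le_of_finrank_le hWU (h.trans (finrank_lt_finrank_of_lt hDW))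

/-- The Krylov subspace `⟨v, T v, …, T ^ (t - 1) v⟩` of a semilinear map `T`: the form of the
Gabidulin codes `Gab` over an arbitrary vector space. It is `⊥` for `t = 0`. -/
def krylov (T : V →ₛₗ[σ] V) (t : ℕ) (v : V) : Submodule K V :=
  span K (Set.range fun j : Fin t => T^[j] v)

lemma krylov_one (T : V →ₛₗ[σ] V) (v : V) : krylov T 1 v = span K {v} := by
  simp [krylov]

lemma krylov_le_succ (T : V →ₛₗ[σ] V) (t : ℕ) (v : V) : krylov T t v ≤ krylov T (t + 1) v :=
  span_mono (Set.range_subset_iff.2 fun j => ⟨j.castSucc, rfl⟩)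

lemma finrank_krylov_le (T : V →ₛₗ[σ] V) (t : ℕ) (v : V) :
    Module.finrank K (krylov T t v) ≤ t :=
  (finrank_range_le_card _).trans_eq (Fintype.card_fin t)

variable [RingHomSurjective σ]

lemma krylov_succ (T : V →ₛₗ[σ] V) (t : ℕ) (v : V) :
    krylov T (t + 1) v = span K {v} ⊔ (krylov T t v).map T := by
  simp only [krylov, map_span, Fin.range_fin_succ, Fin.tail_def, span_insert,
    ← Set.range_comp, Function.comp_def, Fin.val_zero, Fin.val_succ, Function.iterate_zero, id_eq,
    Function.iterate_succ_apply']

lemma krylov_succ_sup_map (T : V →ₛₗ[σ] V) (t : ℕ) (v : V) :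
    krylov T (t + 1) v ⊔ (krylov T (t + 1) v).map T = krylov T (t + 2) v := by
  have hmap : (krylov T t v).map T ≤ (krylov T (t + 1) v).map T :=
    map_mono (krylov_le_succ T t v)
  calc krylov T (t + 1) v ⊔ (krylov T (t + 1) v).map T
      = span K {v} ⊔ ((krylov T t v).map T ⊔ (krylov T (t + 1) v).map T) := by
        rw [← sup_assoc, ← krylov_succ]
    _ = krylov T (t + 2) v := by rw [sup_eq_right.2 hmap, ← krylov_succ]

variable [FiniteDimensional K V]

lemma finrank_sup_map_add_finrank_inf_comap {T : V →ₛₗ[σ] V} (hT : Function.Injective T)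
    (U : Submodule K V) :
    Module.finrank K ↥(U ⊔ U.map T) + Module.finrank K ↥(U ⊓ U.comap T) =
      Module.finrank K U + Module.finrank K U := by
  rw [← finrank_map_of_injective hT (U ⊓ U.comap T), ← map_inf_eq_map_inf_comap, inf_comm,
    finrank_sup_add_finrank_inf_eq, finrank_map_of_injective hT]

lemma exists_invariant_sup_krylov {T : V →ₛₗ[σ] V} (hT : Function.Injective T)
    (U : Submodule K V)
    (hU : Module.finrank K ↥(U ⊔ U.map T) = Module.finrank K U + 1) :
    ∃ (t : ℕ) (v : V) (W : Submodule K V), W.map T ≤ W ∧ W ⊔ krylov T (t + 1) v = U ∧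
      Module.finrank K W + (t + 1) = Module.finrank K U := by
  induction U using WellFoundedLT.induction with
  | ind U ih =>
    let D := U ⊓ U.comap T
    have hDU : D ≤ U := inf_le_left
    have hTDU : D.map T ≤ U := map_le_iff_le_comap.2 inf_le_right
    have hD : Module.finrank K D + 1 = Module.finrank K U := by
      have : _ + Module.finrank K D = _ := finrank_sup_map_add_finrank_inf_comap hT U
      omega
    have hDlt : D < U := lt_of_le_of_finrank_lt_finrank hDU (by omega)
    by_cases hTD : D.map T ≤ D
    · obtain ⟨v, hvU, hvD⟩ := SetLike.exists_of_lt hDlt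
      have hvU' : span K {v} ≤ U := (span_singleton_le_iff_mem v U).2 hvU
      have hlt : D < D ⊔ span K {v} :=
        left_lt_sup.2 fun h => hvD ((span_singleton_le_iff_mem v D).1 h)
      refine ⟨0, v, D, hTD, ?_, hD⟩
      rw [krylov_one]
      exact eq_of_lt_of_le_of_finrank_le_succ hlt (sup_le hDU hvU') hD.ge
    · have hDTD : D ⊔ D.map T = U :=
        eq_of_lt_of_le_of_finrank_le_succ (left_lt_sup.2 hTD) (sup_le hDU hTDU) hD.ge
      obtain ⟨t, v, W, hW, hsup, hfin⟩ := ih D hDlt (by rw [hDTD, hD])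
      refine ⟨t + 1, v, W, hW, ?_, by omega⟩
      rw [← hDTD, ← hsup, Submodule.map_sup, sup_sup_sup_comm, sup_eq_left.2 hW,
        krylov_succ_sup_map]

lemma exists_invariant_disjoint_krylov {T : V →ₛₗ[σ] V} (hT : Function.Injective T)
    {U : Submodule K V}
    (hU : Module.finrank K ↥(U ⊔ U.map T) = Module.finrank K U + 1) :
    ∃ (t : ℕ) (v : V) (W : Submodule K V), W.map T ≤ W ∧ Disjoint W (krylov T t v) ∧
      W ⊔ krylov T t v = U ∧ Module.finrank K (krylov T t v) = t := by
  obtain ⟨t, v, W, hW, rfl, hdim⟩ := exists_invariant_sup_krylov hT U hU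
  have hle := finrank_krylov_le T (t + 1) v
  have hadd := finrank_sup_add_finrank_inf_eq W (krylov T (t + 1) v)
  refine ⟨t + 1, v, W, hW, ?_, rfl, by omega⟩
  rw [disjoint_iff, ← finrank_eq_zero (R := K)]
  omega

end Semilinear

section FixedVectors

variable {K ι : Type*} [DivisionRing K] [Finite ι] {σ : K →+* K} {C : Submodule K (ι → K)}

lemma exists_fixed_support_subset (hC : ∀ c ∈ C, σ ∘ c ∈ C) {c : ι → K} (hc : c ∈ C)
    (hc0 : c ≠ 0) :
    ∃ w ∈ C, w ≠ 0 ∧ σ ∘ w = w ∧ Function.support w ⊆ Function.support c := by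
  induction hs : Function.support c using WellFoundedLT.induction generalizing c with
  | ind s ih =>
    subst hs
    obtain ⟨i, hi⟩ := Function.ne_iff.1 hc0
    let a := (c i)⁻¹ • c
    have ha : a ∈ C := C.smul_mem _ hc
    have hai : a i = 1 := inv_mul_cancel₀ hi
    have hac : Function.support a ⊆ Function.support c := Function.support_const_smul_subset _ c
    by_cases hfix : σ ∘ a = a
    · exact ⟨a, ha, Function.ne_iff.2 ⟨i, by simp [hai]⟩, hfix, hac⟩
    · have hsub : Function.support (σ ∘ a - a) ⊆ Function.support c := fun j hj =>
        hac fun h => hj (by simp [h])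
      have hlt : Function.support (σ ∘ a - a) < Function.support c :=
        hsub.ssubset_of_mem_notMem hi (by simp [hai])
      obtain ⟨w, hwC, hw0, hwfix, hw⟩ :=
        ih _ hlt (C.sub_mem (hC a ha) ha) (sub_ne_zero.2 hfix) rfl
      exact ⟨w, hwC, hw0, hwfix, hw.trans hsub⟩

lemma span_fixed_eq (hC : ∀ c ∈ C, σ ∘ c ∈ C) : span K {v | v ∈ C ∧ σ ∘ v = v} = C := by
  refine le_antisymm (span_le.2 fun v hv => hv.1) fun c hc => ?_
  induction hs : Function.support c using WellFoundedLT.induction generalizing c with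
  | ind s ih =>
    subst hs
    rcases eq_or_ne c 0 with rfl | hc0
    · exact zero_mem _
    obtain ⟨w, hwC, hw0, hwfix, hw⟩ := exists_fixed_support_subset hC hc hc0
    obtain ⟨i, hi⟩ := Function.ne_iff.1 hw0
    let a := c i * (w i)⁻¹
    have hsub : Function.support (c - a • w) ⊆ Function.support c := fun j hj => by
      contrapose! hj
      simp [Function.notMem_support.1 hj, Function.notMem_support.1 fun h => hj (hw h)]
    have hlt : Function.support (c - a • w) < Function.support c :=
      hsub.ssubset_of_mem_notMem (hw hi) (by simp [a, inv_mul_cancel_right₀ hi])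
    have hrest := ih _ hlt _ (C.sub_mem hc (C.smul_mem a hwC)) rfl
    have hwspan : w ∈ span K {v | v ∈ C ∧ σ ∘ v = v} := subset_span ⟨hwC, hwfix⟩
    simpa only [sub_add_cancel] using add_mem hrest (smul_mem _ a hwspan)

end FixedVectors

section RationalVectors

variable {F ι : Type*} [Field F]

lemma finrank_span_range_algebraMap_comp {L : Type*} [Ring L] [Nontrivial L] [Algebra F L]
    {w : ι → F} (hw : w ≠ 0) :
    Module.finrank F (span F (Set.range (algebraMap F L ∘ w))) = 1 := by
  obtain ⟨i, hi⟩ := Function.ne_iff.1 hw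
  have htop : span F (Set.range w) = ⊤ :=
    Ideal.eq_top_of_isUnit_mem _ (subset_span ⟨i, rfl⟩) (isUnit_iff_ne_zero.2 hi)
  have hmap : span F (Set.range (algebraMap F L ∘ w)) = 1 := by
    rw [Set.range_comp, ← Algebra.coe_linearMap, ← map_span, htop, Submodule.map_top, one_eq_range]
  rw [hmap, one_eq_span, finrank_span_singleton one_ne_zero]

lemma exists_forall_comp_mem_span_algebraMap [Finite ι] {L : Type*} [CommRing L] [Algebra F L]
    (g : ι → L) :
    ∃ A : Fin (Module.finrank F (span F (Set.range g))) → ι → F, ∀ σ : L →ₐ[F] L,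
      σ ∘ g ∈ span L (Set.range fun j => algebraMap F L ∘ A j) := by
  have := FiniteDimensional.span_of_finite F (Set.finite_range g)
  obtain ⟨u, -, hu, -⟩ := exists_fun_fin_finrank_span_eq F (Set.range g)
  have hg (i : ι) : ∃ c : Fin _ → F, ∑ j, c j • u j = g i :=
    (mem_span_range_iff_exists_fun F).1 (hu.ge (subset_span ⟨i, rfl⟩))
  choose A hA using hg
  refine ⟨fun j i => A i j, fun σ => (mem_span_range_iff_exists_fun L).2 ⟨fun j => σ (u j), ?_⟩⟩
  funext i
  simp [← hA, Algebra.smul_def, mul_comm]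

lemma mem_range_algebraMap_of_apply_eq_self {L : Type*} [Field L] [Algebra F L] [IsGalois F L]
    {θ : L ≃ₐ[F] L} (hθ : ∀ τ : L ≃ₐ[F] L, τ ∈ Subgroup.zpowers θ) (x : L) (hx : θ x = x) :
    x ∈ Set.range (algebraMap F L) := by
  have hstab : Subgroup.zpowers θ ≤ MulAction.stabilizer (L ≃ₐ[F] L) x :=
    Subgroup.zpowers_le.2 hx
  exact (InfiniteGalois.mem_range_algebraMap_iff_fixed x).2 fun τ => hstab (hθ τ)

end RationalVectors

section Codes

variable {F : Type} [Field F] [Algebra F E] {n : ℕ}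

lemma entrywiseR_injective (σ : E ≃+* E) : Function.Injective (entrywiseR (n := n) σ) :=
  σ.injective.comp_left

lemma entrywiseR_iterate (θ : E ≃ₐ[F] E) (j : ℕ) (g : Fin n → E) :
    (entrywiseR θ.toRingEquiv)^[j] g = fun i => (θ ^ j) (g i) := by
  induction j with
  | zero => rfl
  | succ j ih => rw [Function.iterate_succ_apply', ih, pow_succ']; rfl

lemma gab_eq_krylov (θ : E ≃ₐ[F] E) (t : ℕ) (g : Fin n → E) :
    Gab θ t g = krylov (entrywiseR θ.toRingEquiv) t g := by
  simp only [Gab, krylov, entrywiseR_iterate]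

lemma sumCode_one (θ : E ≃ₐ[F] E) (C : Submodule E (Fin n → E)) :
    sumCode θ 1 C = C ⊔ C.map (entrywiseR θ.toRingEquiv) := by
  have hid : mapCode (θ ^ 0) C = C := SetLike.coe_injective (Set.image_id _)
  have hθ : mapCode (θ ^ 1) C = C.map (entrywiseR θ.toRingEquiv) := by rw [pow_one]; rfl
  rw [← hθ]
  nth_rewrite 2 [← hid]
  simp only [sumCode]
  exact le_antisymm (iSup_le (Fin.forall_fin_two.2 ⟨le_sup_left, le_sup_right⟩))
    (sup_le (le_iSup_of_le 0 le_rfl) (le_iSup_of_le 1 le_rfl))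

lemma map_gab_le_of_finrank_le (θ : E ≃ₐ[F] E) {t : ℕ} {g : Fin n → E}
    (h : Module.finrank F (span F (Set.range g)) ≤ Module.finrank E (Gab θ t g)) :
    (Gab θ t g).map (entrywiseR θ.toRingEquiv) ≤ Gab θ t g := by
  obtain ⟨A, hA⟩ := exists_forall_comp_mem_span_algebraMap (F := F) g
  have hle : Gab θ t g ≤ span E (Set.range fun j => algebraMap F E ∘ A j) :=
    span_le.2 (Set.range_subset_iff.2 fun j => hA (θ ^ (j : ℕ)).toAlgHom)
  have hspan : Gab θ t g = span E (Set.range fun j => algebraMap F E ∘ A j) :=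
    eq_of_le_of_finrank_le hle <|
      (finrank_range_le_card _).trans ((Fintype.card_fin _).trans_le h)
  rw [hspan, map_span_le]
  rintro _ ⟨j, rfl⟩
  exact subset_span ⟨j, funext fun i => (θ.commutes (A j i)).symm⟩

lemma exists_rank_one_basis {θ : E ≃ₐ[F] E} (hθ : ∀ x, θ x = x → x ∈ Set.range (algebraMap F E))
    {C : Submodule E (Fin n → E)} (hC : C.map (entrywiseR θ.toRingEquiv) ≤ C) :
    ∃ b : Fin (Module.finrank E C) → (Fin n → E), LinearIndependent E b ∧
      span E (Set.range b) = C ∧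
      ∀ i, Module.finrank F (span F (Set.range (b i))) = 1 := by
  have hfixed : span E {v | v ∈ C ∧ (θ : E →+* E) ∘ v = v} = C :=
    span_fixed_eq fun c hc => hC (mem_map_of_mem hc)
  have hbasis := exists_fun_fin_finrank_span_eq E {v | v ∈ C ∧ (θ : E →+* E) ∘ v = v}
  rw [hfixed] at hbasis
  obtain ⟨b, hb, hspan, hli⟩ := hbasis
  refine ⟨b, hli, hspan, fun i => ?_⟩
  choose w hw using fun j => hθ (b i j) (congrFun (hb i).2 j)
  have hbw : b i = algebraMap F E ∘ w := funext fun j => (hw j).symm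
  have hw0 : w ≠ 0 := fun h =>
    hli.ne_zero i (hbw.trans (funext fun j => by simp [h]))
  rw [hbw, finrank_span_range_algebraMap_comp hw0]

theorem stmt19_general (k : ℕ) (θ : E ≃ₐ[F] E)
    (hθ : ∀ x, θ x = x → x ∈ Set.range (algebraMap F E))
    (C : Submodule E (Fin n → E)) (hC : Module.finrank E C = k)
    (hs1 : Module.finrank E (sumCode θ 1 C) = k + 1) :
    ∃ (t : ℕ) (g : Fin n → E) (C₁ : Submodule E (Fin n → E)),
      t ≤ k ∧
      t < Module.finrank F (Submodule.span F (Set.range g)) ∧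
      Module.finrank E C₁ = k - t ∧
      (∃ b : Fin (k - t) → (Fin n → E),
        LinearIndependent E b ∧
        Submodule.span E (Set.range b) = C₁ ∧
        ∀ i, Module.finrank F (Submodule.span F (Set.range (b i))) = 1) ∧
      Disjoint C₁ (Gab θ t g) ∧
      C₁ ⊔ Gab θ t g = C := by
  subst hC
  rw [sumCode_one] at hs1
  obtain ⟨t, g, C₁, hC₁, hdisj, hsup, hdim⟩ :=
    exists_invariant_disjoint_krylov (entrywiseR_injective θ.toRingEquiv) hs1
  rw [← gab_eq_krylov] at hdisj hsup hdim
  have hadd := finrank_sup_add_finrank_inf_eq C₁ (Gab θ t g)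
  rw [hsup, hdisj.eq_bot, finrank_bot, hdim] at hadd
  have hk : Module.finrank E C₁ = Module.finrank E C - t := by omega
  refine ⟨t, g, C₁, by omega, ?_, hk, hk ▸ exists_rank_one_basis hθ hC₁, hdisj, hsup⟩
  by_contra! hrank
  have hCstable : C.map (entrywiseR θ.toRingEquiv) ≤ C := by
    rw [← hsup, Submodule.map_sup]
    exact sup_le_sup hC₁ (map_gab_le_of_finrank_le θ (hrank.trans_eq hdim.symm))
  rw [sup_eq_left.2 hCstable] at hs1
  omega

end Codes

/-- if `dim(C + θ(C)) = k+1` then `C = C₁ ⊕ G_{t,θ}(g)` with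
`rk_q(g) > t` and `C₁` a `(k−t)`-dimensional subcode with a basis of vectors of
q-rank 1. -/
theorem stmt19 {F : Type} [Field F] [Algebra F E] [Fintype F] [Fintype E]
    (q m n k : ℕ) (hq : IsPrimePow q)
    (hF : Fintype.card F = q) (hE : Fintype.card E = q ^ m)
    (hk : 0 < k) (hkn : k < n) (hnm : n ≤ m)
    (θ : E ≃ₐ[F] E) (hθ : ∀ τ : E ≃ₐ[F] E, τ ∈ Subgroup.zpowers θ)
    (C : Submodule E (Fin n → E)) (hC : Module.finrank E C = k)
    (hs1 : Module.finrank E (sumCode θ 1 C) = k + 1) :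
    ∃ (t : ℕ) (g : Fin n → E) (C₁ : Submodule E (Fin n → E)),
      t ≤ k ∧
      t < Module.finrank F (Submodule.span F (Set.range g)) ∧
      Module.finrank E C₁ = k - t ∧
      (∃ b : Fin (k - t) → (Fin n → E),
        LinearIndependent E b ∧
        Submodule.span E (Set.range b) = C₁ ∧
        ∀ i, Module.finrank F (Submodule.span F (Set.range (b i))) = 1) ∧
      Disjoint C₁ (Gab θ t g) ∧
      C₁ ⊔ Gab θ t g = C := by
  exact stmt19_general k θ (mem_range_algebraMap_of_apply_eq_self hθ) C hC hs1
end
end
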